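/- arXiv:2303.00599 — 3 statements merged into one kernel-verified Lean document; each statement's English description precedes it below -/
import Mathlib

section
/- Let (X, 𝒜, μ) be a measure space, let 0 ≤ α < 1, and let p, q : X → ℝ be measurable with p ≥ 0 and q > 0 μ-almost everywhere, such that the function x ↦ (p(x) - q(x))²/q(x) is integrable with respect to μ. Define m = α·p + (1-α)·q. Then the function x ↦ (p(x) - m(x))²/m(x) is integrable and ∫ (p - m)²/m dμ ≤ (1-α) · ∫ (p - q)²/q dμ. -/
/-! Since `p - m = (1 - α) (p - q)` and `m ≥ (1 - α) q > 0`, the integrand satisfies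
`(p - m)² / m ≤ (1 - α) (p - q)² / q` almost everywhere; domination and monotonicity of the
integral give both conclusions. -/

open MeasureTheory

theorem chi2_mixture_divergence_le
    {X : Type*} [MeasurableSpace X] (μ : Measure X)
    (α : ℝ) (hα0 : 0 ≤ α) (hα1 : α < 1)
    (p q : X → ℝ) (hpm : Measurable p) (hqm : Measurable q)
    (hp0 : ∀ᵐ x ∂μ, 0 ≤ p x) (hq0 : ∀ᵐ x ∂μ, 0 < q x)
    (hint : Integrable (fun x => (p x - q x) ^ 2 / q x) μ)
    (m : X → ℝ) (hm : ∀ x, m x = α * p x + (1 - α) * q x) :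
    Integrable (fun x => (p x - m x) ^ 2 / m x) μ ∧
      (∫ x, (p x - m x) ^ 2 / m x ∂μ) ≤
        (1 - α) * ∫ x, (p x - q x) ^ 2 / q x ∂μ := by
  have hβ : 0 < 1 - α := sub_pos.mpr hα1
  have key : ∀ᵐ x ∂μ, 0 ≤ (p x - m x) ^ 2 / m x ∧
      (p x - m x) ^ 2 / m x ≤ (1 - α) * ((p x - q x) ^ 2 / q x) := by
    filter_upwards [hp0, hq0] with x hp hq
    have hβq : 0 < (1 - α) * q x := mul_pos hβ hq
    have hle : (1 - α) * q x ≤ m x := by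
      rw [hm]
      linarith [mul_nonneg hα0 hp]
    refine ⟨div_nonneg (sq_nonneg _) (hβq.le.trans hle), ?_⟩
    calc (p x - m x) ^ 2 / m x ≤ (p x - m x) ^ 2 / ((1 - α) * q x) :=
          div_le_div_of_nonneg_left (sq_nonneg _) hβq hle
      _ = (1 - α) * ((p x - q x) ^ 2 / q x) := by
          have hpm_eq : p x - m x = (1 - α) * (p x - q x) := by
            rw [hm]
            ring
          rw [hpm_eq]
          field_simp
  have hmm : Measurable m := by
    rw [funext hm]
    fun_prop
  have hint' : Integrable (fun x => (p x - m x) ^ 2 / m x) μ := by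
    refine (hint.const_mul (1 - α)).mono'
      (((hpm.sub hmm).pow_const 2).div hmm).aestronglyMeasurable ?_
    filter_upwards [key] with x hx
    rw [Real.norm_of_nonneg hx.1]
    exact hx.2
  refine ⟨hint', ?_⟩
  rw [← integral_const_mul]
  exact integral_mono_ae hint' (hint.const_mul (1 - α)) (key.mono fun x hx => hx.2)
end

section
/- Let (X, 𝒜, μ) be a measure space, let c > 0, and let p, q : X → ℝ be measurable functions with p ≥ 0, q ≥ 0, both integrable with ∫ p dμ = 1 and ∫ q dμ = 1. Define g : X → ℝ by g(x) = (p(x) - q(x))²/(p(x) + q(x)) if p(x) + q(x) > 0 and g(x) = 0 otherwise. Then for every measurable r : X → ℝ such that p·r, q·r, p·r² and q·r² are integrable, ∫ p·r dμ - ∫ q·r dμ - (c/2)·∫ p·r² dμ - (c/2)·∫ q·r² dμ ≤ (1/(2c)) · ∫ g dμ. -/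
/-!
Completing the square gives, wherever `p + q > 0`, the pointwise identity
`g / (2c) - ((p - q) r - (c/2) (p + q) r²) = (p - q - c (p + q) r)² / (2c (p + q)) ≥ 0`,
while both sides vanish where `p = q = 0`. The claim follows by integrating; `g` is integrable
because `0 ≤ g ≤ p + q`.
-/

open MeasureTheory

theorem chi2_variational_objective_le_divergence
    {X : Type*} [MeasurableSpace X] (μ : Measure X)
    (c : ℝ) (hc : 0 < c)
    (p q : X → ℝ) (hpm : Measurable p) (hqm : Measurable q)
    (hp0 : ∀ x, 0 ≤ p x) (hq0 : ∀ x, 0 ≤ q x)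
    (hpi : Integrable p μ) (hqi : Integrable q μ)
    (hp1 : ∫ x, p x ∂μ = 1) (hq1 : ∫ x, q x ∂μ = 1)
    (g : X → ℝ)
    (hg : ∀ x, g x = if 0 < p x + q x then (p x - q x) ^ 2 / (p x + q x) else 0) :
    ∀ r : X → ℝ, Measurable r →
      Integrable (fun x => p x * r x) μ →
      Integrable (fun x => q x * r x) μ →
      Integrable (fun x => p x * (r x) ^ 2) μ →
      Integrable (fun x => q x * (r x) ^ 2) μ →
      (∫ x, p x * r x ∂μ) - (∫ x, q x * r x ∂μ)
          - (c / 2) * (∫ x, p x * (r x) ^ 2 ∂μ)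
          - (c / 2) * (∫ x, q x * (r x) ^ 2 ∂μ) ≤
        (1 / (2 * c)) * ∫ x, g x ∂μ := by
  intro r _ hpr hqr hpr2 hqr2
  -- The case split is redundant, as division by zero gives zero.
  have hg' : g = fun x => (p x - q x) ^ 2 / (p x + q x) := by
    funext x
    rw [hg x]
    split_ifs with h
    · rfl
    · have h0 : p x + q x = 0 := le_antisymm (not_lt.mp h) (add_nonneg (hp0 x) (hq0 x))
      rw [h0, div_zero]
  have hgi : Integrable g μ := by
    refine (hpi.add hqi).mono' ?_ (Filter.Eventually.of_forall fun x => ?_)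
    · rw [hg']
      exact (((hpm.sub hqm).pow_const 2).div (hpm.add hqm)).aestronglyMeasurable
    · have hs : 0 ≤ p x + q x := add_nonneg (hp0 x) (hq0 x)
      simp only [hg', Pi.add_apply]
      rw [Real.norm_of_nonneg (div_nonneg (sq_nonneg _) hs)]
      refine div_le_of_le_mul₀ hs hs ?_
      nlinarith [mul_nonneg (hp0 x) (hq0 x)]
  have h1 : Integrable (fun x => p x * r x - q x * r x) μ := hpr.sub hqr
  have h2 : Integrable (fun x => p x * r x - q x * r x - c / 2 * (p x * r x ^ 2)) μ :=
    h1.sub (hpr2.const_mul _)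
  have h3 : Integrable (fun x => p x * r x - q x * r x - c / 2 * (p x * r x ^ 2)
      - c / 2 * (q x * r x ^ 2)) μ := h2.sub (hqr2.const_mul _)
  rw [← integral_const_mul, ← integral_const_mul, ← integral_const_mul,
    ← integral_sub hpr hqr, ← integral_sub h1 (hpr2.const_mul _),
    ← integral_sub h2 (hqr2.const_mul _)]
  refine integral_mono h3 (hgi.const_mul _) fun x => ?_
  simp only [hg x]
  split_ifs with h
  · rw [← sub_nonneg]
    have key : 1 / (2 * c) * ((p x - q x) ^ 2 / (p x + q x)) -
        (p x * r x - q x * r x - c / 2 * (p x * r x ^ 2) - c / 2 * (q x * r x ^ 2)) =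
        (p x - q x - c * (p x + q x) * r x) ^ 2 / (2 * c * (p x + q x)) := by
      field_simp
      ring
    rw [key]
    positivity
  · have hpx : p x = 0 := by linarith [hp0 x, hq0 x]
    have hqx : q x = 0 := by linarith [hp0 x, hq0 x]
    simp [hpx, hqx]
end

section
/- Let S and A be finite nonempty types, let P : S → A → S → ℝ satisfy P s a s' ≥ 0 and ∑_{s'} P s a s' = 1 for all s, a, let π : S → A → ℝ satisfy π s a ≥ 0 and ∑_{a} π s a = 1 for all s, let r : S → A → ℝ, let γ be a real number with 0 ≤ γ < 1, let T : S → Prop be a decidable predicate, and let r_A ∈ ℝ. For Q : S → A → ℝ write V_Q(s) = ∑_{a} π s a · Q s a, and define the LS-IQ forward operator B by (B Q)(s,a) = r s a + γ · ∑_{s'} P s a s' · (if T s' then r_A/(1-γ) else V_Q(s')). Then for all Q_A, Q_B : S → A → ℝ, the maximum over (s,a) of |(B Q_A)(s,a) - (B Q_B)(s,a)| is at most γ times the maximum over (s,a) of |Q_A(s,a) - Q_B(s,a)|, i.e. B is a γ-contraction in the supremum norm. -/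
/-! Averaging against a probability vector does not increase a uniform bound on differences
(`abs_weighted_sum_sub_le`). Averaging over `π` bounds the change in the bootstrapped value at a
non-absorbing state by the sup distance of the two Q-functions; at an absorbing state that value is
a constant, so it does not change at all. Averaging over `P` preserves the bound, and the discount
contributes the factor `γ`. -/

theorem abs_weighted_sum_sub_le {ι : Type*} [Fintype ι] (w f g : ι → ℝ) (M : ℝ)
    (hw0 : ∀ i, 0 ≤ w i) (hw1 : ∑ i, w i = 1) (h : ∀ i, |f i - g i| ≤ M) :
    |∑ i, w i * f i - ∑ i, w i * g i| ≤ M := by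
  rw [← Finset.sum_sub_distrib]
  calc |∑ i, (w i * f i - w i * g i)| ≤ ∑ i, |w i * f i - w i * g i| :=
        Finset.abs_sum_le_sum_abs _ _
    _ ≤ ∑ i, w i * M := by
        refine Finset.sum_le_sum fun i _ => ?_
        rw [← mul_sub, abs_mul, abs_of_nonneg (hw0 i)]
        exact mul_le_mul_of_nonneg_left (h i) (hw0 i)
    _ = M := by rw [← Finset.sum_mul, hw1, one_mul]

theorem lsiq_forward_operator_contraction
    {S A : Type*} [Fintype S] [Fintype A] [Nonempty S] [Nonempty A]
    (P : S → A → S → ℝ) (hP0 : ∀ s a s', 0 ≤ P s a s') (hP1 : ∀ s a, ∑ s', P s a s' = 1)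
    (π : S → A → ℝ) (hπ0 : ∀ s a, 0 ≤ π s a) (hπ1 : ∀ s, ∑ a, π s a = 1)
    (r : S → A → ℝ) (γ : ℝ) (hγ0 : 0 ≤ γ) (hγ1 : γ < 1)
    (T : S → Prop) [DecidablePred T] (rA : ℝ)
    (B : (S → A → ℝ) → S → A → ℝ)
    (hB : ∀ Q s a, B Q s a =
      r s a + γ * ∑ s', P s a s' *
        (if T s' then rA / (1 - γ) else ∑ a', π s' a' * Q s' a')) :
    ∀ QA QB : S → A → ℝ,
      (Finset.univ.sup' Finset.univ_nonempty
          (fun sa : S × A => |B QA sa.1 sa.2 - B QB sa.1 sa.2|)) ≤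
        γ * (Finset.univ.sup' Finset.univ_nonempty
          (fun sa : S × A => |QA sa.1 sa.2 - QB sa.1 sa.2|)) := by
  intro QA QB
  set M := Finset.univ.sup' Finset.univ_nonempty
    (fun sa : S × A => |QA sa.1 sa.2 - QB sa.1 sa.2|) with hM
  have hle : ∀ s a, |QA s a - QB s a| ≤ M := fun s a =>
    Finset.le_sup' (fun sa : S × A => |QA sa.1 sa.2 - QB sa.1 sa.2|) (Finset.mem_univ (s, a))
  have hM0 : 0 ≤ M :=
    (abs_nonneg _).trans (hle (Classical.arbitrary S) (Classical.arbitrary A))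
  refine Finset.sup'_le _ _ fun sa _ => ?_
  rw [hB, hB, add_sub_add_left_eq_sub, ← mul_sub, abs_mul, abs_of_nonneg hγ0]
  refine mul_le_mul_of_nonneg_left ?_ hγ0
  refine abs_weighted_sum_sub_le _ _ _ M (hP0 _ _) (hP1 _ _) fun s' => ?_
  by_cases hT : T s'
  · simpa [hT] using hM0
  · simp only [hT, if_false]
    exact abs_weighted_sum_sub_le _ _ _ M (hπ0 s') (hπ1 s') (hle s')
end
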